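/- Let Ĉ₅ be the graph obtained from a cycle of length five by adding a new vertex adjacent to exactly two vertices of the cycle, these two vertices being adjacent to each other. Then there exists a real number τ > 0 such that every graph G that is both Ĉ₅-free and (complement of Ĉ₅)-free satisfies max(α(G), ω(G)) ≥ |G|^τ. -/

import Mathlib

open SimpleGraph

/-- The independence (stable set) number of a graph: the clique number of the complement. -/
noncomputable def alphaNum {V : Type*} (G : SimpleGraph V) : ℕ := Gᶜ.cliqueNum

/-- The clique number of a graph. -/
noncomputable def omegaNum {V : Type*} (G : SimpleGraph V) : ℕ := G.cliqueNum

/-- κ(G) = α(G)·ω(G). -/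
noncomputable def kappaNum {V : Type*} (G : SimpleGraph V) : ℕ := alphaNum G * omegaNum G

/-- `Ĉ₅`: the five-vertex cycle `0-1-2-3-4-0` together with a sixth vertex `5` adjacent to
exactly the two (adjacent) vertices `0` and `1` of the cycle. -/
def hatC5 : SimpleGraph (Fin 6) :=
  SimpleGraph.fromEdgeSet {s(0, 1), s(1, 2), s(2, 3), s(3, 4), s(4, 0), s(5, 0), s(5, 1)}

section
open scoped Classical
variable {V : Type*}

/-- `T` is a stable set of `G`. -/
def StableSet (G : SimpleGraph V) (T : Finset V) : Prop :=
  ∀ a ∈ T, ∀ b ∈ T, ¬ G.Adj a b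

/-- `A` and `B` are disjoint and there are no edges between them. -/
def Anticomplete (G : SimpleGraph V) (A B : Finset V) : Prop :=
  Disjoint A B ∧ ∀ a ∈ A, ∀ b ∈ B, ¬ G.Adj a b

/-- The largest size of a stable subset of `Y`. -/
noncomputable def stab (G : SimpleGraph V) (Y : Finset V) : ℕ :=
  (Y.powerset.filter (StableSet G)).sup Finset.card

lemma StableSet.card_le_stab {G : SimpleGraph V} {T Y : Finset V} (hT : StableSet G T)
    (hTY : T ⊆ Y) : T.card ≤ stab G Y :=
  Finset.le_sup (f := Finset.card) (by simp [hT, hTY])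

lemma exists_stableSet (G : SimpleGraph V) (Y : Finset V) :
    ∃ T ⊆ Y, StableSet G T ∧ T.card = stab G Y := by
  obtain ⟨T, hT, h⟩ := Finset.exists_mem_eq_sup (Y.powerset.filter (StableSet G))
    ⟨∅, by simp [StableSet]⟩ Finset.card
  simp only [Finset.mem_filter, Finset.mem_powerset] at hT
  exact ⟨T, hT.1, hT.2, h.symm⟩

lemma stab_mono {G : SimpleGraph V} {Y Z : Finset V} (h : Y ⊆ Z) : stab G Y ≤ stab G Z := by
  obtain ⟨T, hTY, hT, hc⟩ := exists_stableSet G Y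
  exact hc ▸ hT.card_le_stab (hTY.trans h)

lemma one_le_stab (G : SimpleGraph V) {Y : Finset V} (h : Y.Nonempty) : 1 ≤ stab G Y := by
  obtain ⟨y, hy⟩ := h
  have : StableSet G {y} := by simp [StableSet]
  simpa using this.card_le_stab (Finset.singleton_subset_iff.2 hy)

lemma Anticomplete.mono {G : SimpleGraph V} {A B A' B' : Finset V} (h : Anticomplete G A B)
    (hA : A' ⊆ A) (hB : B' ⊆ B) : Anticomplete G A' B' :=
  ⟨h.1.mono hA hB, fun a ha b hb => h.2 a (hA ha) b (hB hb)⟩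

lemma Anticomplete.symm {G : SimpleGraph V} {A B : Finset V} (h : Anticomplete G A B) :
    Anticomplete G B A :=
  ⟨h.1.symm, fun b hb a ha hab => h.2 a ha b hb hab.symm⟩

lemma Anticomplete.stab_add_le {G : SimpleGraph V} {A B Y : Finset V}
    (h : Anticomplete G A B) (hA : A ⊆ Y) (hB : B ⊆ Y) : stab G A + stab G B ≤ stab G Y := by
  obtain ⟨S, hSA, hS, hSc⟩ := exists_stableSet G A
  obtain ⟨T, hTB, hT, hTc⟩ := exists_stableSet G B
  have hd := h.mono hSA hTB
  rw [← hSc, ← hTc, ← Finset.card_union_of_disjoint hd.1]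
  refine StableSet.card_le_stab ?_ (Finset.union_subset (hSA.trans hA) (hTB.trans hB))
  intro a ha b hb
  rcases Finset.mem_union.1 ha with ha | ha <;> rcases Finset.mem_union.1 hb with hb | hb
  · exact hS a ha b hb
  · exact hd.2 a ha b hb
  · exact hd.symm.2 a ha b hb
  · exact hT a ha b hb

lemma sum_stab_le {ι : Type*} {G : SimpleGraph V} {I : Finset ι} {Y : ι → Finset V}
    {X : Finset V} (hX : ∀ i ∈ I, Y i ⊆ X)
    (hY : ∀ i ∈ I, ∀ j ∈ I, i ≠ j → Anticomplete G (Y i) (Y j)) :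
    ∑ i ∈ I, stab G (Y i) ≤ stab G X := by
  induction I using Finset.induction_on generalizing X with
  | empty => simp
  | insert i I hi ih =>
    rw [Finset.sum_insert hi]
    have h1 : ∑ j ∈ I, stab G (Y j) ≤ stab G (I.biUnion Y) :=
      ih (fun j hj => Finset.subset_biUnion_of_mem Y hj)
        fun a ha b hb => hY a (Finset.mem_insert_of_mem ha) b (Finset.mem_insert_of_mem hb)
    have hij : ∀ j ∈ I, Anticomplete G (Y i) (Y j) := fun j hj =>
      hY i (Finset.mem_insert_self _ _) j (Finset.mem_insert_of_mem hj)
        (fun h => hi (h ▸ hj))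
    have h2 : Anticomplete G (Y i) (I.biUnion Y) := by
      refine ⟨(Finset.disjoint_biUnion_right _ _ _).2 fun j hj => (hij j hj).1, ?_⟩
      intro a ha b hb
      obtain ⟨j, hj, hb⟩ := Finset.mem_biUnion.1 hb
      exact (hij j hj).2 a ha b hb
    have h3 := h2.stab_add_le (Y := X) (hX i (Finset.mem_insert_self _ _))
      (Finset.biUnion_subset.2 fun j hj => hX j (Finset.mem_insert_of_mem hj))
    omega

/-- `X` is a minimal set violating `|X| ^ τ ≤ α * ω`. -/
structure Critical (G : SimpleGraph V) (τ : ℝ) (X : Finset V) : Prop where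
  le_of_ssubset : ∀ Y ⊂ X, (Y.card : ℝ) ^ τ ≤ stab G Y * stab Gᶜ Y
  lt : (stab G X * stab Gᶜ X : ℝ) < (X.card : ℝ) ^ τ

lemma Critical.compl {G : SimpleGraph V} {τ : ℝ} {X : Finset V} (h : Critical G τ X) :
    Critical Gᶜ τ X :=
  ⟨fun Y hY => by simpa [mul_comm] using h.le_of_ssubset Y hY, by
    simpa [mul_comm] using h.lt⟩

lemma Critical.not_blockade {ι : Type*} {G : SimpleGraph V} {D : ℕ} {X : Finset V}
    (h : Critical G (1 / D) X) (hD : 1 ≤ D) {I : Finset ι} {Y : ι → Finset V}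
    (hI : I.Nonempty) (hX : ∀ i ∈ I, Y i ⊂ X)
    (hY : ∀ i ∈ I, ∀ j ∈ I, i ≠ j → Anticomplete G (Y i) (Y j))
    (hc : ∀ i ∈ I, (X.card : ℝ) ≤ (Y i).card * (I.card : ℝ) ^ D) : False := by
  have hk : (0 : ℝ) < I.card := by exact_mod_cast hI.card_pos
  have h1 : ∀ i ∈ I, (X.card : ℝ) ^ (1 / D : ℝ) ≤
      I.card * (stab G (Y i) * stab Gᶜ X) := by
    intro i hi
    have h2 : (X.card : ℝ) ^ (1 / D : ℝ) ≤ ((Y i).card * (I.card : ℝ) ^ D) ^ (1 / D : ℝ) :=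
      Real.rpow_le_rpow (by positivity) (hc i hi) (by positivity)
    rw [Real.mul_rpow (by positivity) (by positivity), one_div,
      Real.pow_rpow_inv_natCast hk.le (by omega)] at h2
    have h3 := h.le_of_ssubset _ (hX i hi)
    have h4 : (stab Gᶜ (Y i) : ℝ) ≤ stab Gᶜ X := by exact_mod_cast stab_mono (hX i hi).1
    rw [one_div] at h3 ⊢
    calc _ ≤ _ := h2
      _ ≤ (stab G (Y i) * stab Gᶜ (Y i)) * I.card := by gcongr
      _ ≤ (stab G (Y i) * stab Gᶜ X) * I.card := by gcongr
      _ = _ := by ring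
  have h5 : (I.card : ℝ) * (X.card : ℝ) ^ (1 / D : ℝ) ≤
      ∑ i ∈ I, I.card * (stab G (Y i) * stab Gᶜ X : ℝ) := by
    rw [← nsmul_eq_mul]; exact Finset.card_nsmul_le_sum _ _ _ h1
  rw [← Finset.mul_sum, ← Finset.sum_mul] at h5
  have h6 := le_of_mul_le_mul_left h5 hk
  have h7 : ((∑ i ∈ I, stab G (Y i) : ℕ) : ℝ) ≤ stab G X := by
    exact_mod_cast sum_stab_le (fun i hi => (hX i hi).1) hY
  push_cast at h7
  have h8 := h.lt
  have h9 : (∑ i ∈ I, (stab G (Y i) : ℝ)) * stab Gᶜ X ≤ stab G X * stab Gᶜ X := by gcongr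
  linarith

end

section
open scoped Classical
variable {V : Type*}

/-- `SparsePair G ε A B`: every vertex of `A` has at most `ε * |B|` neighbours in `B`. -/
def SparsePair (G : SimpleGraph V) (ε : ℝ) (A B : Finset V) : Prop :=
  Disjoint A B ∧ ∀ a ∈ A, ((B.filter (G.Adj a)).card : ℝ) ≤ ε * B.card

lemma embed_or_pair (ε : ℝ) (hε : 0 < ε) (hε1 : ε ≤ 1) (k : ℕ) :
    ∃ γ : ℝ, 0 < γ ∧ γ ≤ 1 ∧ ∀ {V : Type*} (H : SimpleGraph (Fin k)) (G : SimpleGraph V)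
      (U : Fin k → Finset V) (u : ℝ), 0 < u → (∀ i, u ≤ (U i).card) →
      (∀ i j, i ≠ j → Disjoint (U i) (U j)) →
      (∃ f : Fin k → V, (∀ i, f i ∈ U i) ∧ ∀ i j, G.Adj (f i) (f j) ↔ H.Adj i j) ∨
      ∃ i j, ∃ A ⊆ U i, ∃ B ⊆ U j, γ * u ≤ A.card ∧ γ * u ≤ B.card ∧
        (SparsePair G ε A B ∨ SparsePair Gᶜ ε A B) := by
  induction k with
  | zero => exact ⟨1, one_pos, le_rfl, fun H _ _ _ _ _ _ => Or.inl ⟨Fin.elim0, by simp, by simp⟩⟩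
  | succ k ih =>
    obtain ⟨γ, hγ, hγ1, ih⟩ := ih
    refine ⟨γ * ε / (k + 1), by positivity, ?_, ?_⟩
    · rw [div_le_one (by positivity)]
      have : γ * ε ≤ 1 := mul_le_one₀ hγ1 hε.le hε1
      have : (0 : ℝ) ≤ k := by positivity
      linarith
    intro V H G U u hu hU hd
    have hle : γ * ε / (k + 1) * u ≤ γ * (ε * u) := by
      have : γ * ε / (k + 1) ≤ γ * ε := div_le_self (by positivity) (by
        have : (0 : ℝ) ≤ k := by positivity
        linarith)
      nlinarith
    have hle2 : γ * ε / (k + 1) * u ≤ u / (k + 1) := by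
      rw [div_mul_eq_mul_div]
      have : γ * ε ≤ 1 := mul_le_one₀ hγ1 hε.le hε1
      gcongr
      nlinarith
    let W : V → Fin k → Finset V := fun v j =>
      (U j.succ).filter fun w => G.Adj v w ↔ H.Adj 0 j.succ
    by_cases hgood : ∃ v ∈ U 0, ∀ j, ε * (U j.succ).card ≤ (W v j).card
    · obtain ⟨v, hv, hvW⟩ := hgood
      rcases ih (H.comap Fin.succ) G (W v) (ε * u) (by positivity)
        (fun j => le_trans (by have := hU j.succ; gcongr) (hvW j))
        (fun i j hij => (hd i.succ j.succ (by simpa using hij)).mono (Finset.filter_subset _ _)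
          (Finset.filter_subset _ _)) with ⟨f, hf, hfa⟩ | ⟨i, j, A, hA, B, hB, hAc, hBc, h⟩
      · left
        have hfW : ∀ i, f i ∈ U i.succ ∧ (G.Adj v (f i) ↔ H.Adj 0 i.succ) := fun i =>
          Finset.mem_filter.1 (hf i)
        refine ⟨Fin.cons v f, fun i => ?_, fun i j => ?_⟩
        · refine Fin.cases ?_ (fun i => ?_) i
          · simpa using hv
          · simpa using (hfW i).1
        · refine Fin.cases ?_ (fun i => ?_) i <;> refine Fin.cases ?_ (fun j => ?_) j
          · simp
          · simpa using (hfW j).2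
          · simpa [G.adj_comm, H.adj_comm] using (hfW i).2
          · simpa using hfa i j
      · right
        exact ⟨i.succ, j.succ, A, hA.trans (Finset.filter_subset _ _), B,
          hB.trans (Finset.filter_subset _ _), hle.trans hAc, hle.trans hBc, h⟩
    · push Not at hgood
      right
      have hU0 : 0 < (U 0).card := by
        have := hU 0
        have : (0 : ℝ) < (U 0).card := by linarith
        exact_mod_cast this
      have hk : 0 < k := by
        obtain ⟨v, hv⟩ := Finset.card_pos.1 hU0
        exact (hgood v hv).choose.pos
      have : Nonempty (Fin k) := ⟨⟨0, hk⟩⟩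
      choose! g hg using hgood
      obtain ⟨j, -, hj⟩ := Finset.exists_le_card_fiber_of_nsmul_le_card_of_maps_to
        (s := U 0) (t := (Finset.univ : Finset (Fin k))) (f := g) (b := u / (k + 1))
        (fun _ _ => Finset.mem_univ _) ⟨⟨0, hk⟩, Finset.mem_univ _⟩ (by
          have h0 := hU 0
          simp only [Finset.card_univ, Fintype.card_fin, nsmul_eq_mul]
          refine le_trans ?_ h0
          rw [mul_div_assoc', div_le_iff₀ (by positivity)]
          nlinarith)
      refine ⟨0, j.succ, (U 0).filter (fun v => g v = j), Finset.filter_subset _ _, U j.succ,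
        subset_rfl, hle2.trans hj, (hle2.trans ?_).trans (hU _), ?_⟩
      · refine div_le_self hu.le ?_
        have : (0 : ℝ) ≤ k := by positivity
        linarith
      have hdj : Disjoint ((U 0).filter fun v => g v = j) (U j.succ) :=
        (hd 0 j.succ (Fin.succ_ne_zero _).symm).mono_left (Finset.filter_subset _ _)
      by_cases hH : H.Adj 0 j.succ
      · left
        refine ⟨hdj, fun a ha => ?_⟩
        obtain ⟨ha', rfl⟩ := Finset.mem_filter.1 ha
        have := (hg a ha').le
        simpa [W, hH] using this
      · right
        refine ⟨hdj, fun a ha => ?_⟩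
        obtain ⟨ha', rfl⟩ := Finset.mem_filter.1 ha
        have := (hg a ha').le
        simp only [W, hH, iff_false] at this
        refine le_trans (Nat.cast_le.2 (Finset.card_le_card ?_)) this
        intro w hw
        simp only [Finset.mem_filter, compl_adj] at hw ⊢
        tauto

lemma exists_disjoint_subsets (q : ℕ) (k : ℕ) (X : Finset V) (h : k * q ≤ X.card) :
    ∃ U : Fin k → Finset V, (∀ i, U i ⊆ X ∧ (U i).card = q) ∧
      ∀ i j, i ≠ j → Disjoint (U i) (U j) := by
  induction k generalizing X with
  | zero => exact ⟨Fin.elim0, by simp, by simp⟩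
  | succ k ih =>
    rw [add_mul, one_mul] at h
    obtain ⟨Y, hYX, hY⟩ := Finset.exists_subset_card_eq (show q ≤ X.card by omega)
    obtain ⟨U, hU, hd⟩ := ih (X \ Y) (by rw [Finset.card_sdiff_of_subset hYX]; omega)
    have hUY : ∀ i, Disjoint Y (U i) := fun i =>
      Finset.disjoint_of_subset_right (hU i).1 Finset.disjoint_sdiff
    refine ⟨Fin.cons Y U, fun i => ?_, fun i j => ?_⟩
    · refine Fin.cases ?_ (fun i => ?_) i
      · simpa using ⟨hYX, hY⟩
      · simpa using ⟨(hU i).1.trans Finset.sdiff_subset, (hU i).2⟩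
    · refine Fin.cases ?_ (fun i => ?_) i <;> refine Fin.cases ?_ (fun j => ?_) j
      · simp
      · intro _; simpa using hUY j
      · intro _; simpa using (hUY i).symm
      · intro hij; simpa using hd i j (by simpa using hij)

/-- No map to the vertices of `G` reflects and preserves the adjacency of `H`. -/
def NoCopy {k : ℕ} (H : SimpleGraph (Fin k)) (G : SimpleGraph V) : Prop :=
  ¬ ∃ f : Fin k → V, ∀ i j, G.Adj (f i) (f j) ↔ H.Adj i j

lemma exists_restricted_pair {k : ℕ} (hk : 0 < k) (H : SimpleGraph (Fin k)) (ε : ℝ) (hε : 0 < ε)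
    (hε1 : ε ≤ 1) :
    ∃ γ : ℝ, 0 < γ ∧ γ ≤ 1 ∧ ∀ {V : Type*} (G : SimpleGraph V) (X : Finset V), NoCopy H G → k ≤ X.card →
      ∃ A ⊆ X, ∃ B ⊆ X, γ * X.card ≤ A.card ∧ γ * X.card ≤ B.card ∧
        (SparsePair G ε A B ∨ SparsePair Gᶜ ε A B) := by
  obtain ⟨γ, hγ, hγ1, h⟩ := embed_or_pair ε hε hε1 k
  have hk' : (1 : ℝ) ≤ k := by exact_mod_cast hk
  refine ⟨γ / (2 * k), by positivity, ?_, ?_⟩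
  · rw [div_le_one (by positivity)]; linarith
  intro V G X hG hX
  set q := X.card / k with hq
  have hq1 : 1 ≤ q := (Nat.one_le_div_iff hk).2 hX
  obtain ⟨U, hU, hd⟩ := exists_disjoint_subsets q k X (Nat.mul_div_le _ _)
  have hXq : (X.card : ℝ) ≤ 2 * k * q := by
    have h1 : X.card < k * (q + 1) := Nat.lt_mul_div_succ _ hk
    have h2 : k * 1 ≤ k * q := Nat.mul_le_mul_left _ hq1
    have h3 : X.card ≤ 2 * k * q := by nlinarith
    exact_mod_cast h3
  have hle : γ / (2 * k) * X.card ≤ γ * q := by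
    rw [div_mul_eq_mul_div, div_le_iff₀ (by positivity)]
    nlinarith
  rcases h H G U q (by exact_mod_cast hq1) (fun i => by rw [(hU i).2]) hd with
    ⟨f, -, hf⟩ | ⟨i, j, A, hA, B, hB, hAc, hBc, h⟩
  · exact absurd ⟨f, hf⟩ hG
  · exact ⟨A, hA.trans (hU i).1, B, hB.trans (hU j).1, hle.trans hAc, hle.trans hBc, h⟩

lemma exists_subset_sum_le (f : V → ℝ) (c : ℝ) (m : ℕ) (B : Finset V)
    (hm : m ≤ B.card) (hB : ∑ b ∈ B, f b ≤ c * B.card) :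
    ∃ B' ⊆ B, B'.card = m ∧ ∑ b ∈ B', f b ≤ c * m := by
  obtain ⟨n, hn⟩ : ∃ n, B.card = m + n := ⟨B.card - m, by omega⟩
  induction n generalizing B with
  | zero => exact ⟨B, subset_rfl, hn, by rw [hn] at hB; simpa using hB⟩
  | succ n ih =>
    by_cases hb : ∃ b ∈ B, c ≤ f b
    · obtain ⟨b, hbB, hb⟩ := hb
      have hcard : (B.erase b).card = m + n := by rw [Finset.card_erase_of_mem hbB]; omega
      obtain ⟨B', hB', h⟩ := ih (B.erase b) (by omega) (by
        rw [← Finset.add_sum_erase B f hbB, hn] at hB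
        rw [hcard]; push_cast at hB ⊢; linarith) hcard
      exact ⟨B', hB'.trans (Finset.erase_subset _ _), h⟩
    · push Not at hb
      obtain ⟨B', hB', hc⟩ := Finset.exists_subset_card_eq hm
      refine ⟨B', hB', hc, ?_⟩
      have := Finset.sum_le_card_nsmul B' f c fun b hb' => (hb b (hB' hb')).le
      rw [hc, nsmul_eq_mul] at this
      linarith

/-- The number of ordered pairs in `S × T` that are adjacent in `G`. -/
noncomputable def edgeCount (G : SimpleGraph V) (S T : Finset V) : ℝ :=
  ∑ a ∈ S, ((T.filter (G.Adj a)).card : ℝ)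

lemma edgeCount_eq_sum (G : SimpleGraph V) (S T : Finset V) :
    edgeCount G S T = ∑ a ∈ S, ∑ b ∈ T, if G.Adj a b then (1 : ℝ) else 0 := by
  simp [edgeCount]

lemma edgeCount_comm (G : SimpleGraph V) (S T : Finset V) :
    edgeCount G S T = edgeCount G T S := by
  rw [edgeCount_eq_sum, edgeCount_eq_sum, Finset.sum_comm]
  simp [G.adj_comm]

lemma edgeCount_union_left (G : SimpleGraph V) {A B : Finset V} (h : Disjoint A B)
    (T : Finset V) : edgeCount G (A ∪ B) T = edgeCount G A T + edgeCount G B T :=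
  Finset.sum_union h

lemma edgeCount_union_self (G : SimpleGraph V) {A B : Finset V} (h : Disjoint A B) :
    edgeCount G (A ∪ B) (A ∪ B) =
      edgeCount G A A + edgeCount G B B + 2 * edgeCount G B A := by
  rw [edgeCount_union_left G h, edgeCount_comm G A, edgeCount_comm G B,
    edgeCount_union_left G h, edgeCount_union_left G h, edgeCount_comm G A B]
  ring

lemma edgeCount_le (G : SimpleGraph V) (S T : Finset V) :
    edgeCount G S T ≤ S.card * T.card := by
  rw [← nsmul_eq_mul]
  exact Finset.sum_le_card_nsmul _ _ _ fun a _ => by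
    exact_mod_cast Finset.card_filter_le _ _

/-- A set of `s * m` vertices spanning few edges, as obtained from `s` blocks of size `m` that are
pairwise `ε`-sparse. -/
def SparseBlocks (G : SimpleGraph V) (ε : ℝ) (s m : ℕ) (S : Finset V) : Prop :=
  S.card = s * m ∧ edgeCount G S S ≤ s * m ^ 2 + ε * s ^ 2 * m ^ 2

lemma SparsePair.extend_blocks {G : SimpleGraph V} {ε : ℝ} (hε : 0 < ε) {s m : ℕ}
    {A B S : Finset V} (h : SparsePair G ε A B) (hSA : S ⊆ A) (hS : SparseBlocks G ε s m S)
    (hm : m ≤ B.card) : ∃ T ⊆ A ∪ B, SparseBlocks G ε (s + 1) m T := by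
  have h1 : ∑ b ∈ B, ((S.filter (G.Adj b)).card : ℝ) ≤ (ε * S.card) * B.card := by
    have : edgeCount G S B ≤ S.card • (ε * B.card) :=
      Finset.sum_le_card_nsmul _ _ _ fun a ha => h.2 a (hSA ha)
    rw [edgeCount_comm, nsmul_eq_mul] at this
    calc _ ≤ _ := this
      _ = _ := by ring
  obtain ⟨B', hB', hc, hs⟩ := exists_subset_sum_le _ _ m B hm h1
  have hd : Disjoint S B' := h.1.mono hSA hB'
  refine ⟨S ∪ B', Finset.union_subset_union hSA hB', ?_, ?_⟩
  · rw [Finset.card_union_of_disjoint hd, hc, hS.1]; ring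
  · rw [edgeCount_union_self G hd]
    have h2 := edgeCount_le G B' B'
    have h3 : edgeCount G B' S ≤ ε * S.card * m := hs
    rw [hS.1] at h3
    rw [hc] at h2
    have h4 := hS.2
    push_cast at h3 ⊢
    have : 0 ≤ ε * m ^ 2 := by positivity
    nlinarith

lemma exists_sparseBlocks {k : ℕ} (hk : 0 < k) (H : SimpleGraph (Fin k)) (ε : ℝ) (hε : 0 < ε)
    (hε1 : ε ≤ 1) (s t : ℕ) :
    ∃ δ : ℝ, 0 < δ ∧ ∀ {V : Type*} (G : SimpleGraph V) (X : Finset V) (m : ℕ), NoCopy H G →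
      (m : ℝ) ≤ δ * X.card →
      (∃ S ⊆ X, SparseBlocks G ε s m S) ∨ ∃ S ⊆ X, SparseBlocks Gᶜ ε t m S := by
  have hempty : ∀ {V : Type _} (G : SimpleGraph V) (s m : ℕ), s * m = 0 → SparseBlocks G ε s m ∅ := by
    intro V G s m h
    refine ⟨by simp [h], ?_⟩
    simp only [edgeCount, Finset.sum_empty]
    positivity
  induction s generalizing t with
  | zero => exact ⟨1, one_pos, fun G X m _ _ => Or.inl ⟨∅, by simp, hempty _ _ _ (by simp)⟩⟩
  | succ s ihs =>
    induction t with
    | zero => exact ⟨1, one_pos, fun G X m _ _ => Or.inr ⟨∅, by simp, hempty _ _ _ (by simp)⟩⟩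
    | succ t iht =>
      obtain ⟨δ₁, hδ₁, h₁⟩ := ihs (t + 1)
      obtain ⟨δ₂, hδ₂, h₂⟩ := iht
      obtain ⟨γ, hγ, hγ1, hpair⟩ := exists_restricted_pair hk H ε hε hε1
      have hk' : (0 : ℝ) < k := by exact_mod_cast hk
      refine ⟨min (min (δ₁ * γ) (δ₂ * γ)) (min γ (1 / k)), by positivity, ?_⟩
      intro V G X m hG hm
      rcases Nat.eq_zero_or_pos m with rfl | hm0
      · exact Or.inl ⟨∅, by simp, hempty _ _ _ (by simp)⟩
      have hm0' : (1 : ℝ) ≤ m := by exact_mod_cast hm0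
      have hbound : ∀ c, min (min (δ₁ * γ) (δ₂ * γ)) (min γ (1 / k)) ≤ c → (m : ℝ) ≤ c * X.card :=
        fun c hc => hm.trans (by gcongr)
      have hXk : k ≤ X.card := by
        have := hbound (1 / k) (by simp)
        rw [div_mul_eq_mul_div, one_mul, le_div_iff₀ hk'] at this
        have : (k : ℝ) ≤ X.card := by nlinarith
        exact_mod_cast this
      obtain ⟨A, hA, B, hB, hAc, hBc, hAB⟩ := hpair G X hG hXk
      have hmB : m ≤ B.card := by
        have := (hbound γ (by simp)).trans hBc
        exact_mod_cast this
      rcases hAB with hAB | hAB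
      · rcases h₁ G A m hG (by
          have := hbound (δ₁ * γ) (by simp)
          nlinarith) with ⟨S, hS, h⟩ | ⟨S, hS, h⟩
        · obtain ⟨T, hT, h⟩ := hAB.extend_blocks hε hS h hmB
          exact Or.inl ⟨T, hT.trans (Finset.union_subset hA hB), h⟩
        · exact Or.inr ⟨S, hS.trans hA, h⟩
      · rcases h₂ G A m hG (by
          have := hbound (δ₂ * γ) (by simp)
          nlinarith) with ⟨S, hS, h⟩ | ⟨S, hS, h⟩
        · exact Or.inl ⟨S, hS.trans hA, h⟩
        · obtain ⟨T, hT, h⟩ := hAB.extend_blocks hε hS h hmB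
          exact Or.inr ⟨T, hT.trans (Finset.union_subset hA hB), h⟩

/-- Every vertex of `S` has at most `ε * |S|` neighbours in `S`. -/
def SparseSet (G : SimpleGraph V) (ε : ℝ) (S : Finset V) : Prop :=
  ∀ a ∈ S, ((S.filter (G.Adj a)).card : ℝ) ≤ ε * S.card

lemma exists_sparse_of_edgeCount_le (G : SimpleGraph V) {ε : ℝ} (hε : 0 < ε) (S : Finset V)
    (hS : edgeCount G S S ≤ ε * S.card ^ 2) :
    ∃ T ⊆ S, (S.card : ℝ) ≤ 2 * T.card ∧ SparseSet G (4 * ε) T := by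
  rcases S.eq_empty_or_nonempty with rfl | hne
  · exact ⟨∅, by simp, by simp, by simp [SparseSet]⟩
  have hpos : (0 : ℝ) < S.card := by exact_mod_cast hne.card_pos
  set T := S.filter fun a => ((S.filter (G.Adj a)).card : ℝ) ≤ 2 * ε * S.card with hT
  set R := S.filter fun a => ¬ ((S.filter (G.Adj a)).card : ℝ) ≤ 2 * ε * S.card with hR
  have hTR : (T.card : ℝ) + R.card = S.card := by
    exact_mod_cast Finset.card_filter_add_card_filter_not _
  have h1 : R.card • (2 * ε * S.card) ≤ edgeCount G R S :=
    Finset.card_nsmul_le_sum _ _ _ fun a ha => (not_le.1 (Finset.mem_filter.1 ha).2).le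
  have h2 : edgeCount G R S ≤ edgeCount G S S :=
    Finset.sum_le_sum_of_subset_of_nonneg (Finset.filter_subset _ _) fun _ _ _ => by positivity
  rw [nsmul_eq_mul] at h1
  have h3 : (2 * R.card : ℝ) ≤ S.card := by
    have : (ε * S.card) * (2 * R.card) ≤ (ε * S.card) * S.card := by nlinarith
    exact le_of_mul_le_mul_left this (by positivity)
  refine ⟨T, Finset.filter_subset _ _, by linarith, fun a ha => ?_⟩
  have h4 := (Finset.mem_filter.1 ha).2
  have h5 : ((T.filter (G.Adj a)).card : ℝ) ≤ (S.filter (G.Adj a)).card := by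
    exact_mod_cast Finset.card_le_card (Finset.filter_subset_filter _ (Finset.filter_subset _ _))
  nlinarith

/-- Rödl's theorem. -/
lemma exists_sparse_or_dense {k : ℕ} (hk : 0 < k) (H : SimpleGraph (Fin k)) (ε : ℝ) (hε : 0 < ε)
    (hε1 : ε ≤ 1) :
    ∃ δ : ℝ, 0 < δ ∧ ∀ {V : Type*} (G : SimpleGraph V) (X : Finset V), NoCopy H G → X.Nonempty →
      ∃ S ⊆ X, δ * X.card ≤ S.card ∧ (SparseSet G ε S ∨ SparseSet Gᶜ ε S) := by
  obtain ⟨s, hs⟩ := exists_nat_gt (8 / ε)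
  have hs0 : (0 : ℝ) < s := lt_trans (by positivity) hs
  rw [div_lt_iff₀ hε] at hs
  obtain ⟨δ, hδ, h⟩ := exists_sparseBlocks hk H (ε / 8) (by positivity) (by linarith) s s
  refine ⟨min 1 δ / 4, by positivity, ?_⟩
  intro V G X hG hX
  have hX0 : (1 : ℝ) ≤ X.card := by exact_mod_cast hX.card_pos
  by_cases hbig : 1 ≤ δ * X.card
  · set m := ⌊δ * X.card⌋₊
    have hm1 : (1 : ℝ) ≤ m := by exact_mod_cast (Nat.one_le_floor_iff _).2 hbig
    have hm2 : δ * X.card < m + 1 := Nat.lt_floor_add_one _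
    have key : ∀ G' : SimpleGraph V, (∃ S ⊆ X, SparseBlocks G' (ε / 8) s m S) →
        ∃ S ⊆ X, min 1 δ / 4 * X.card ≤ S.card ∧ SparseSet G' ε S := by
      rintro G' ⟨S, hSX, hSc, hSe⟩
      obtain ⟨T, hTS, hTc, hT⟩ := exists_sparse_of_edgeCount_le G' (ε := ε / 4) (by positivity) S (by
        refine hSe.trans ?_
        rw [hSc]
        push_cast
        have : 0 ≤ (s : ℝ) * m ^ 2 := by positivity
        nlinarith)
      refine ⟨T, hTS.trans hSX, ?_, by convert hT using 1; ring⟩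
      have h1 : min 1 δ / 4 * X.card ≤ δ / 4 * X.card := by gcongr; exact min_le_right _ _
      have h2 : (m : ℝ) ≤ S.card := by
        rw [hSc]; push_cast
        have : (1 : ℝ) ≤ s := by exact_mod_cast Nat.cast_pos.1 hs0
        nlinarith
      linarith
    rcases h G X m hG (Nat.floor_le (by positivity)) with h | h
    · obtain ⟨S, h1, h2, h3⟩ := key G h
      exact ⟨S, h1, h2, Or.inl h3⟩
    · obtain ⟨S, h1, h2, h3⟩ := key Gᶜ h
      exact ⟨S, h1, h2, Or.inr h3⟩
  · obtain ⟨x, hx⟩ := hX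
    refine ⟨{x}, by simpa using hx, ?_, Or.inl ?_⟩
    · have : min 1 δ / 4 * X.card ≤ δ * X.card := by
        gcongr
        have := min_le_right 1 δ
        have : 0 < min 1 δ := by positivity
        linarith
      simp only [Finset.card_singleton, Nat.cast_one]
      linarith
    · intro a ha
      rw [Finset.mem_singleton] at ha
      subst ha
      simp [Finset.filter_singleton]
      positivity

end
section
variable {V : Type*}

instance : DecidableRel hatC5.Adj := fun a b =>
  inferInstanceAs (Decidable ((fromEdgeSet
    {s(0, 1), s(1, 2), s(2, 3), s(3, 4), s(4, 0), s(5, 0), s(5, 1)} :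
      SimpleGraph (Fin 6)).Adj a b))

lemma hatC5_twin_free : ∀ i j : Fin 6, (∀ l, hatC5.Adj i l ↔ hatC5.Adj j l) → i = j := by
  decide

lemma noCopy_hatC5 {G : SimpleGraph V} (h : ¬ Nonempty (hatC5 ↪g G)) : NoCopy hatC5 G := by
  rintro ⟨f, hf⟩
  refine h ⟨⟨⟨f, fun i j hij => hatC5_twin_free i j fun l => ?_⟩, hf _ _⟩⟩
  rw [← hf, ← hf, hij]

lemma noCopy_hatC5_compl {G : SimpleGraph V} (h : ¬ Nonempty (hatC5ᶜ ↪g G)) :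
    NoCopy hatC5 Gᶜ := by
  refine noCopy_hatC5 fun ⟨f⟩ => h ⟨⟨f.toEmbedding, ?_⟩⟩
  intro a b
  have h1 := f.map_adj_iff (v := a) (w := b)
  have h2 := f.injective.eq_iff (a := a) (b := b)
  simp only [compl_adj] at h1 ⊢
  change G.Adj (f a) (f b) ↔ _
  by_cases hab : a = b
  · simp [hab]
  · simp only [ne_eq, h2, hab, not_false_eq_true, true_and] at h1 ⊢
    tauto

lemma NoCopy.hatC5_false {G : SimpleGraph V} (h : NoCopy hatC5 G) {a b c d e w : V}
    (hab : G.Adj a b) (hbc : G.Adj b c) (hcd : G.Adj c d) (hde : G.Adj d e) (hea : G.Adj e a)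
    (hwa : G.Adj w a) (hwb : G.Adj w b) (hac : ¬ G.Adj a c) (had : ¬ G.Adj a d)
    (hbd : ¬ G.Adj b d) (hbe : ¬ G.Adj b e) (hce : ¬ G.Adj c e) (hwc : ¬ G.Adj w c)
    (hwd : ¬ G.Adj w d) (hwe : ¬ G.Adj w e) : False := by
  refine h ⟨![a, b, c, d, e, w], fun i j => ?_⟩
  fin_cases i <;> fin_cases j <;>
    simp [hatC5, hab, hbc, hcd, hde, hea, hwa, hwb, hac, had, hbd, hbe, hce, hwc, hwd, hwe,
      hab.symm, hbc.symm, hcd.symm, hde.symm, hea.symm, hwa.symm, hwb.symm,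
      mt G.adj_symm hac, mt G.adj_symm had, mt G.adj_symm hbd, mt G.adj_symm hbe,
      mt G.adj_symm hce, mt G.adj_symm hwc, mt G.adj_symm hwd, mt G.adj_symm hwe]

end
section
open scoped Classical
variable {V : Type*}

/-- The vertices of `U` with a neighbour in `T`. -/
noncomputable def nbhd (G : SimpleGraph V) (T U : Finset V) : Finset V :=
  U.filter fun u => ∃ a ∈ T, G.Adj a u

/-- `B` assigns to each `a ∈ I` a set of neighbours of `a` in `U` that are adjacent to no other
member of `I`. -/
def IsComb (G : SimpleGraph V) (I U : Finset V) (B : V → Finset V) : Prop :=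
  ∀ a ∈ I, B a ⊆ U ∧ ∀ b ∈ B a, ∀ a' ∈ I, G.Adj a' b ↔ a' = a

lemma exists_comb_peel (G : SimpleGraph V) (T : Finset V) (Δ : ℝ) (hΔ : 0 ≤ Δ) (U : Finset V)
    (hU : ∀ a ∈ T, ((U.filter (G.Adj a)).card : ℝ) ≤ Δ) :
    ∃ I ⊆ T, ∃ B : V → Finset V, ∃ U' ⊆ U, IsComb G I (U \ U') B ∧
      (∀ a ∈ I, Δ / 4 ≤ (B a).card) ∧ (∀ a ∈ T, ((U'.filter (G.Adj a)).card : ℝ) ≤ Δ / 2) ∧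
      ((U \ U').card : ℝ) ≤ I.card * Δ + 2 * (nbhd G I (U \ U')).card := by
  induction hn : U.card using Nat.strong_induction_on generalizing U with
  | _ n ih =>
  by_cases hsmall : ∀ a ∈ T, ((U.filter (G.Adj a)).card : ℝ) ≤ Δ / 2
  · exact ⟨∅, by simp, fun _ => ∅, U, subset_rfl, by simp [IsComb], by simp, hsmall, by simp⟩
  push Not at hsmall
  obtain ⟨a₁, ha₁, hlarge⟩ := hsmall
  set D := U.filter (G.Adj a₁) with hD
  have hDU : D ⊆ U := Finset.filter_subset _ _
  have hDpos : 0 < D.card := by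
    have : (0 : ℝ) < D.card := lt_of_le_of_lt (by positivity) hlarge
    exact_mod_cast this
  have hcard : (U \ D).card < n := by
    rw [Finset.card_sdiff_of_subset hDU]
    have := Finset.card_le_card hDU
    omega
  obtain ⟨I, hIT, B, U', hU', hB, hBc, hsm, hinv⟩ := ih _ hcard (U \ D) (fun a ha =>
    le_trans (Nat.cast_le.2 (Finset.card_le_card
        (Finset.filter_subset_filter _ Finset.sdiff_subset))) (hU a ha)) rfl
  have hU'U : U' ⊆ U := hU'.trans Finset.sdiff_subset
  have hsplit : U \ U' = D ∪ ((U \ D) \ U') := by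
    ext x
    simp only [Finset.mem_sdiff, Finset.mem_union]
    constructor
    · tauto
    · rintro (h | h)
      · exact ⟨hDU h, fun hx => (Finset.mem_sdiff.1 (hU' hx)).2 h⟩
      · tauto
  have hdisj : Disjoint D ((U \ D) \ U') := by
    rw [Finset.disjoint_left]; intro x; simp only [Finset.mem_sdiff]; tauto
  have hcs : ((U \ U').card : ℝ) = D.card + ((U \ D) \ U').card := by
    rw [hsplit, Finset.card_union_of_disjoint hdisj]; push_cast; ring
  have hns : ∀ J, ((nbhd G J (U \ U')).card : ℝ) =
      (nbhd G J D).card + (nbhd G J ((U \ D) \ U')).card := by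
    intro J
    rw [hsplit, nbhd, Finset.filter_union, Finset.card_union_of_disjoint
      (Finset.disjoint_filter_filter hdisj)]
    push_cast; rfl
  have hDsplit : ((nbhd G I D).card : ℝ) + (D \ nbhd G I D).card = D.card := by
    have := Finset.card_sdiff_add_card_eq_card (s := nbhd G I D) (t := D)
      (Finset.filter_subset _ _)
    have h2 : ((D \ nbhd G I D).card : ℝ) + (nbhd G I D).card = D.card := by exact_mod_cast this
    linarith
  have hsub : (U \ D) \ U' ⊆ U \ U' := by rw [hsplit]; exact Finset.subset_union_right
  by_cases htooth : Δ / 4 ≤ (D \ nbhd G I D).card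
  · by_cases ha₁I : a₁ ∈ I
    · have : D \ nbhd G I D = ∅ := by
        rw [Finset.sdiff_eq_empty_iff_subset]
        intro x hx
        exact Finset.mem_filter.2 ⟨hx, a₁, ha₁I, (Finset.mem_filter.1 hx).2⟩
      have h4 : ((D \ nbhd G I D).card : ℝ) = 0 := by rw [this]; simp
      refine ⟨I, hIT, B, U', hU'U, fun a ha => ⟨(hB a ha).1.trans hsub, (hB a ha).2⟩, hBc, hsm, ?_⟩
      rw [hcs, hns]
      have : (0:ℝ) ≤ D.card := by positivity
      linarith
    refine ⟨insert a₁ I, Finset.insert_subset ha₁ hIT,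
      fun a => if a = a₁ then D \ nbhd G I D else B a, U', hU'U, ?_, ?_, hsm, ?_⟩
    · intro a ha
      rcases Finset.mem_insert.1 ha with rfl | haI
      · simp only [if_true]
        refine ⟨Finset.sdiff_subset.trans (by rw [hsplit]; exact Finset.subset_union_left), ?_⟩
        intro b hb a' ha'
        simp only [Finset.mem_sdiff, nbhd, Finset.mem_filter, not_and, not_exists] at hb
        rcases Finset.mem_insert.1 ha' with rfl | ha'I
        · simpa using (Finset.mem_filter.1 hb.1).2
        · have := hb.2 hb.1 a' ha'I
          have hne : a' ≠ a := fun h => ha₁I (h ▸ ha'I)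
          simp [this, hne]
      · have hne : a ≠ a₁ := fun h => ha₁I (h ▸ haI)
        simp only [hne, if_false]
        refine ⟨(hB a haI).1.trans hsub, fun b hb a' ha' => ?_⟩
        rcases Finset.mem_insert.1 ha' with rfl | ha'I
        · have h1 := (hB a haI).1 hb
          simp only [Finset.mem_sdiff, hD, Finset.mem_filter, not_and] at h1
          simp [h1.1.2 h1.1.1, hne.symm]
        · exact (hB a haI).2 b hb a' ha'I
    · intro a ha
      rcases Finset.mem_insert.1 ha with rfl | haI
      · simpa using htooth
      · have hne : a ≠ a₁ := fun h => ha₁I (h ▸ haI)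
        simpa [hne] using hBc a haI
    · rw [hcs, Finset.card_insert_of_notMem ha₁I]
      have h5 : ((nbhd G I ((U \ D) \ U')).card : ℝ) ≤ (nbhd G (insert a₁ I) (U \ U')).card := by
        refine Nat.cast_le.2 (Finset.card_le_card ?_)
        intro x hx
        obtain ⟨hx, a, ha, hax⟩ := Finset.mem_filter.1 hx
        exact Finset.mem_filter.2 ⟨hsub hx, a, Finset.mem_insert_of_mem ha, hax⟩
      have := hU a₁ ha₁
      push_cast
      linarith
  · push Not at htooth
    refine ⟨I, hIT, B, U', hU'U, fun a ha => ⟨(hB a ha).1.trans hsub, (hB a ha).2⟩, hBc, hsm, ?_⟩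
    rw [hcs, hns]
    linarith

lemma card_nbhd_le (G : SimpleGraph V) (I U : Finset V) (Δ : ℝ)
    (h : ∀ a ∈ I, ((U.filter (G.Adj a)).card : ℝ) ≤ Δ) : ((nbhd G I U).card : ℝ) ≤ I.card * Δ := by
  have h1 : nbhd G I U ⊆ I.biUnion fun a => U.filter (G.Adj a) := by
    intro x hx
    obtain ⟨hx, a, ha, hax⟩ := Finset.mem_filter.1 hx
    exact Finset.mem_biUnion.2 ⟨a, ha, Finset.mem_filter.2 ⟨hx, hax⟩⟩
  have h2 : ((nbhd G I U).card : ℝ) ≤ ∑ a ∈ I, ((U.filter (G.Adj a)).card : ℝ) := by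
    exact_mod_cast (Finset.card_le_card h1).trans Finset.card_biUnion_le
  refine h2.trans ?_
  rw [← nsmul_eq_mul]
  exact Finset.sum_le_card_nsmul _ _ _ h

/-- A set `U` covered by `T`, with no large comb between `T` and `U`, is small. -/
lemma card_le_of_no_comb (G : SimpleGraph V) (T : Finset V) (Γ : ℝ) (hΓ : 0 < Γ) (s : ℕ)
    (Δ : ℝ) (hΔ : 0 < Δ) (hs : Δ < 2 ^ s) (U : Finset V) (hcov : ∀ u ∈ U, ∃ a ∈ T, G.Adj a u)
    (hU : ∀ a ∈ T, ((U.filter (G.Adj a)).card : ℝ) ≤ Δ)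
    (hno : ∀ I ⊆ T, ∀ B : V → Finset V, I.Nonempty → IsComb G I U B →
      ∃ a ∈ I, ((B a).card : ℝ) * I.card ^ 2 < Γ) :
    (U.card : ℝ) ≤ 21 * √(Γ * Δ) := by
  induction s generalizing Δ U with
  | zero =>
    have : U = ∅ := by
      rw [Finset.eq_empty_iff_forall_notMem]
      intro u hu
      obtain ⟨a, ha, hau⟩ := hcov u hu
      have h1 : ((U.filter (G.Adj a)).card : ℝ) < 1 := by
        have := hU a ha
        simp at hs; linarith
      have h2 : (U.filter (G.Adj a)).card < 1 := by exact_mod_cast h1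
      have : 0 < (U.filter (G.Adj a)).card := Finset.card_pos.2 ⟨u, by simp [hu, hau]⟩
      omega
    rw [this]; simp
  | succ s ih =>
    obtain ⟨I, hIT, B, U', hU'U, hB, hBc, hsm, hinv⟩ := exists_comb_peel G T Δ hΔ.le U hU
    have hrec := ih (Δ / 2) (by positivity) (by rw [pow_succ] at hs; linarith) U'
      (fun u hu => hcov u (hU'U hu)) hsm (fun J hJ C hne hC => hno J hJ C hne
        fun a ha => ⟨(hC a ha).1.trans hU'U, (hC a ha).2⟩)
    have hnb := card_nbhd_le G I (U \ U') Δ fun a ha =>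
      le_trans (Nat.cast_le.2 (Finset.card_le_card
        (Finset.filter_subset_filter _ Finset.sdiff_subset))) (hU a (hIT ha))
    have hcard : (U.card : ℝ) = (U \ U').card + U'.card := by
      exact_mod_cast (Finset.card_sdiff_add_card_eq_card hU'U).symm
    have hsq : (I.card * Δ) ^ 2 ≤ (2 * √(Γ * Δ)) ^ 2 := by
      rw [mul_pow 2, Real.sq_sqrt (by positivity)]
      rcases I.eq_empty_or_nonempty with rfl | hne
      · simp; positivity
      obtain ⟨a, ha, hlt⟩ := hno I hIT B hne fun a ha =>
        ⟨(hB a ha).1.trans Finset.sdiff_subset, (hB a ha).2⟩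
      have h3 : Δ / 4 * I.card ^ 2 ≤ Γ := by
        have := hBc a ha
        nlinarith [sq_nonneg (I.card : ℝ)]
      nlinarith
    have hI : I.card * Δ ≤ 2 * √(Γ * Δ) := le_of_sq_le_sq hsq (by positivity)
    have hhalf : √(Γ * (Δ / 2)) ≤ 5 / 7 * √(Γ * Δ) := by
      refine Real.sqrt_le_iff.2 ⟨by positivity, ?_⟩
      rw [mul_pow, Real.sq_sqrt (by positivity)]
      have : 0 < Γ * Δ := by positivity
      nlinarith
    linarith

end
section
open scoped Classical
variable {V : Type*}

/-- `C` cannot be split into two nonempty parts without an edge between them. -/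
def ConnSet (G : SimpleGraph V) (C : Finset V) : Prop :=
  ∀ P ⊆ C, P.Nonempty → P ≠ C → ∃ p ∈ P, ∃ q ∈ C \ P, G.Adj p q

lemma exists_connSet_or_split (G : SimpleGraph V) (m : ℝ) (hm : 0 ≤ m) (j : ℕ) (B : Finset V)
    (hB : 2 * m * j ≤ B.card) :
    (∃ C ⊆ B, m ≤ C.card ∧ ConnSet G C) ∨ ∃ F : Fin j → Finset V,
      (∀ i, F i ⊆ B ∧ m ≤ (F i).card) ∧ ∀ i i', i ≠ i' → Anticomplete G (F i) (F i') := by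
  induction j generalizing B with
  | zero => exact Or.inr ⟨Fin.elim0, by simp, by simp⟩
  | succ j ih =>
    push_cast at hB
    have hj : (0 : ℝ) ≤ j := by positivity
    let P : Finset V → Prop := fun Y => Y ⊆ B ∧ m ≤ Y.card ∧ Anticomplete G Y (B \ Y)
    have hPB : P B := ⟨subset_rfl, by nlinarith, by simp [Anticomplete]⟩
    obtain ⟨Y, hYP, hmin⟩ := exists_minimal_of_wellFoundedLT P ⟨B, hPB⟩
    obtain ⟨hYB, hYm, hY⟩ := hYP
    by_cases hconn : ConnSet G Y
    · exact Or.inl ⟨Y, hYB, hYm, hconn⟩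
    have hsmall : (Y.card : ℝ) ≤ 2 * m := by
      simp only [ConnSet, not_forall, not_exists, not_and] at hconn
      obtain ⟨Q, hQY, hQ, hne, hno⟩ := hconn
      have hsep : ∀ R, R ⊆ Y → R ≠ Y → Anticomplete G R (Y \ R) → (R.card : ℝ) < m := by
        intro R hRY hRne hR
        by_contra hcon
        push Not at hcon
        refine hRne (subset_antisymm hRY (hmin ⟨hRY.trans hYB, hcon, ?_⟩ hRY))
        refine ⟨Finset.disjoint_sdiff, fun a ha b hb => ?_⟩
        rw [Finset.mem_sdiff] at hb
        by_cases hbY : b ∈ Y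
        · exact hR.2 a ha b (Finset.mem_sdiff.2 ⟨hbY, hb.2⟩)
        · exact hY.2 a (hRY ha) b (Finset.mem_sdiff.2 ⟨hb.1, hbY⟩)
      have hQanti : Anticomplete G Q (Y \ Q) := ⟨Finset.disjoint_sdiff, hno⟩
      have h1 := hsep Q hQY hne hQanti
      have h2 := hsep (Y \ Q) Finset.sdiff_subset (by
        intro h
        obtain ⟨q, hq⟩ := hQ
        have := hQY hq
        rw [← h] at this
        exact (Finset.mem_sdiff.1 this).2 hq) (by
        rw [Finset.sdiff_sdiff_eq_self hQY]; exact hQanti.symm)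
      have h3 : ((Y \ Q).card : ℝ) + Q.card = Y.card := by
        exact_mod_cast Finset.card_sdiff_add_card_eq_card hQY
      linarith
    have hrest : ((B \ Y).card : ℝ) + Y.card = B.card := by
      exact_mod_cast Finset.card_sdiff_add_card_eq_card hYB
    rcases ih (B \ Y) (by linarith) with ⟨C, hC, h⟩ | ⟨F, hF, hFa⟩
    · exact Or.inl ⟨C, hC.trans Finset.sdiff_subset, h⟩
    · right
      have hYF : ∀ i, Anticomplete G Y (F i) := fun i => hY.mono subset_rfl (hF i).1
      refine ⟨Fin.cons Y F, fun i => ?_, fun i i' => ?_⟩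
      · refine Fin.cases ?_ (fun i => ?_) i
        · simpa using ⟨hYB, hYm⟩
        · simpa using ⟨(hF i).1.trans Finset.sdiff_subset, (hF i).2⟩
      · refine Fin.cases ?_ (fun i => ?_) i <;> refine Fin.cases ?_ (fun i' => ?_) i'
        · simp
        · intro _; simpa using hYF i'
        · intro _; simpa using (hYF i).symm
        · intro hij; simpa using hFa i i' (by simpa using hij)

/-- A vertex not complete and not anticomplete to a connected set is adjacent to exactly one end
of some edge of the set. -/
lemma ConnSet.exists_edge {G : SimpleGraph V} {C : Finset V} (hC : ConnSet G C) {b u w : V}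
    (hu : u ∈ C) (hw : w ∈ C) (hbu : G.Adj b u) (hbw : ¬ G.Adj b w) :
    ∃ p ∈ C, ∃ q ∈ C, G.Adj p q ∧ G.Adj b p ∧ ¬ G.Adj b q := by
  obtain ⟨p, hp, q, hq, hpq⟩ := hC (C.filter (G.Adj b)) (Finset.filter_subset _ _)
    ⟨u, by simp [hu, hbu]⟩ (fun h => hbw (Finset.mem_filter.1 (h ▸ hw)).2)
  simp only [Finset.mem_sdiff, Finset.mem_filter, not_and] at hp hq
  exact ⟨p, hp.1, q, hq.1, hpq, hp.2, hq.2 hq.1⟩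

end

section
open scoped Classical
variable {V : Type*}

lemma card_le_of_triangle_free (J : SimpleGraph V) (I : Finset V)
    (h : ∀ a ∈ I, ∀ b ∈ I, ∀ c ∈ I, J.Adj a b → J.Adj a c → ¬ J.Adj b c) :
    I.card ≤ stab J I + stab J I * stab J I := by
  obtain ⟨T, hTI, hT, hTc⟩ := exists_stableSet J I
  have hcov : I ⊆ T ∪ nbhd J T I := by
    intro x hx
    by_contra hcon
    simp only [nbhd, Finset.mem_union, Finset.mem_filter, not_or, not_and, not_exists] at hcon
    have hst : StableSet J (insert x T) := by
      intro a ha b hb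
      rcases Finset.mem_insert.1 ha with rfl | haT <;> rcases Finset.mem_insert.1 hb with rfl | hbT
      · exact J.irrefl
      · exact fun hab => hcon.2 hx b hbT hab.symm
      · exact hcon.2 hx a haT
      · exact hT a haT b hbT
    have h1 := hst.card_le_stab (Finset.insert_subset hx hTI)
    rw [Finset.card_insert_of_notMem hcon.1] at h1
    omega
  have hnb : ((nbhd J T I).card : ℝ) ≤ T.card * (stab J I : ℝ) := by
    refine card_nbhd_le J T I _ fun a ha => Nat.cast_le.2 ?_
    refine StableSet.card_le_stab ?_ (Finset.filter_subset _ _)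
    intro b hb c hc
    rw [Finset.mem_filter] at hb hc
    exact h a (hTI ha) b hb.1 c hc.1 hb.2 hc.2
  have hnb' : (nbhd J T I).card ≤ T.card * stab J I := by exact_mod_cast hnb
  have := (Finset.card_le_card hcov).trans (Finset.card_union_le _ _)
  rw [hTc] at this hnb'
  omega

/-- Teeth of a comb attached to a common neighbour: a vertex of one tooth is complete or
anticomplete to any connected part of another tooth. -/
lemma IsComb.adj_of_adj {G : SimpleGraph V} (hG : NoCopy hatC5 G) {v : V} {I U : Finset V}
    {B : V → Finset V} (hI : StableSet G I) (hvI : ∀ a ∈ I, G.Adj v a)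
    (hvU : ∀ u ∈ U, ¬ G.Adj v u) (hB : IsComb G I U B) {a a' b u w : V} (ha : a ∈ I)
    (ha' : a' ∈ I) (hne : a ≠ a') {C : Finset V} (hCB : C ⊆ B a) (hC : ConnSet G C)
    (hb : b ∈ B a') (hu : u ∈ C) (hw : w ∈ C) (hbu : G.Adj b u) : G.Adj b w := by
  by_contra hbw
  obtain ⟨p, hp, q, hq, hpq, hbp, hbq⟩ := hC.exists_edge hu hw hbu hbw
  have hself : ∀ x ∈ I, ∀ y ∈ B x, G.Adj x y := fun x hx y hy => ((hB x hx).2 y hy x hx).2 rfl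
  have hoth : ∀ x ∈ I, ∀ y ∈ B x, ∀ x' ∈ I, x' ≠ x → ¬ G.Adj x' y :=
    fun x hx y hy x' hx' h h' => h (((hB x hx).2 y hy x' hx').1 h')
  have hv : ∀ x ∈ I, ∀ y ∈ B x, ¬ G.Adj y v := fun x hx y hy h => hvU y ((hB x hx).1 hy) h.symm
  exact hG.hatC5_false (hself a ha p (hCB hp)) hbp.symm (hself a' ha' b hb).symm
    (hvI a' ha').symm (hvI a ha) (hself a ha q (hCB hq)).symm hpq.symm
    (hoth a' ha' b hb a ha hne) (hI a ha a' ha')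
    (fun h => hoth a ha p (hCB hp) a' ha' hne.symm h.symm) (hv a ha p (hCB hp)) (hv a' ha' b hb)
    (fun h => hbq h.symm) (fun h => hoth a ha q (hCB hq) a' ha' hne.symm h.symm)
    (hv a ha q (hCB hq))

/-- Among three teeth attached to a common neighbour, no three vertices from different teeth form
a triangle. -/
lemma IsComb.not_triangle {G : SimpleGraph V} (hG : NoCopy hatC5 G) {v : V} {I U : Finset V}
    {B : V → Finset V} (hI : StableSet G I) (hvI : ∀ a ∈ I, G.Adj v a)
    (hvU : ∀ u ∈ U, ¬ G.Adj v u) (hB : IsComb G I U B) {a a' a'' b b' b'' : V} (ha : a ∈ I)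
    (ha' : a' ∈ I) (ha'' : a'' ∈ I) (h : a ≠ a') (h' : a ≠ a'') (h'' : a' ≠ a'')
    (hb : b ∈ B a) (hb' : b' ∈ B a') (hb'' : b'' ∈ B a'') (hbb' : G.Adj b b')
    (hbb'' : G.Adj b b'') : ¬ G.Adj b' b'' := by
  intro hb₁b₂
  have hself : ∀ x ∈ I, ∀ y ∈ B x, G.Adj x y := fun x hx y hy => ((hB x hx).2 y hy x hx).2 rfl
  have hoth : ∀ x ∈ I, ∀ y ∈ B x, ∀ x' ∈ I, x' ≠ x → ¬ G.Adj y x' :=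
    fun x hx y hy x' hx' h h' => h (((hB x hx).2 y hy x' hx').1 h'.symm)
  have hv : ∀ x ∈ I, ∀ y ∈ B x, ¬ G.Adj y v := fun x hx y hy h => hvU y ((hB x hx).1 hy) h.symm
  exact hG.hatC5_false hbb' (hself a' ha' b' hb').symm (hvI a' ha').symm (hvI a ha)
    (hself a ha b hb) hbb''.symm hb₁b₂.symm (hoth a ha b hb a' ha' h.symm) (hv a ha b hb)
    (hv a' ha' b' hb') (hoth a' ha' b' hb' a ha h) (hI a' ha' a ha)
    (hoth a'' ha'' b'' hb'' a' ha' h'') (hv a'' ha'' b'' hb'') (hoth a'' ha'' b'' hb'' a ha h')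

lemma le_mul_pow_of_le {δ n y : ℝ} {s d : ℕ} (hn : 0 ≤ n) (hy : 0 ≤ y) (hs : 2 ≤ s)
    (hd : 16 ≤ δ * 2 ^ d) (h : δ * n ≤ 16 * (s : ℝ) ^ 6 * y) : n ≤ y * (s : ℝ) ^ (d + 6) := by
  have hs' : (2 : ℝ) ≤ s := by exact_mod_cast hs
  have h1 : (2 : ℝ) ^ d ≤ (s : ℝ) ^ d := by gcongr
  have h2 : 16 * n ≤ 2 ^ d * (δ * n) := by nlinarith
  have h3 : 2 ^ d * (δ * n) ≤ (s : ℝ) ^ d * (16 * (s : ℝ) ^ 6 * y) :=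
    (mul_le_mul_of_nonneg_left h (by positivity)).trans (by gcongr)
  rw [pow_add]
  nlinarith

/-- A critical set contains no large comb attached to a common neighbour. -/
lemma Critical.not_comb {G : SimpleGraph V} (hG : NoCopy hatC5 G) {d : ℕ} {X : Finset V}
    (hX : Critical G (1 / (d + 6 : ℕ)) X) {δ Γ : ℝ} (hd : 16 ≤ δ * 2 ^ d) (hΓ : 0 < Γ)
    (hΓX : δ * X.card ≤ Γ) {v : V} (hv : v ∈ X) {I U : Finset V} {B : V → Finset V}
    (hI : StableSet G I) (hvI : ∀ a ∈ I, G.Adj v a) (hUX : U ⊆ X) (hvU : ∀ u ∈ U, ¬ G.Adj v u)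
    (hvnU : v ∉ U) (hB : IsComb G I U B) (hk : 3 ≤ I.card)
    (hBc : ∀ a ∈ I, Γ ≤ (B a).card * (I.card : ℝ) ^ 2) : False := by
  set k := I.card with hkdef
  have hk' : (3 : ℝ) ≤ k := by exact_mod_cast hk
  have hproper : ∀ Y ⊆ U, Y ⊂ X := fun Y hY =>
    Finset.ssubset_iff_subset_ne.2 ⟨hY.trans hUX, fun h => hvnU (hY (h ▸ hv))⟩
  have hconn : ∀ a ∈ I, ∃ C ⊆ B a, ((B a).card : ℝ) / (2 * k) ≤ C.card ∧ ConnSet G C := by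
    intro a ha
    rcases exists_connSet_or_split G ((B a).card / (2 * k) : ℝ) (by positivity) k (B a)
      (le_of_eq (by field_simp)) with h | ⟨F, hF, hFa⟩
    · exact h
    exfalso
    refine hX.not_blockade (by omega) (I := Finset.univ) (Y := F) ⟨⟨0, by omega⟩, by simp⟩
      (fun i _ => hproper _ ((hF i).1.trans (hB a ha).1)) (fun i _ i' _ => hFa i i') ?_
    intro i _
    rw [Finset.card_univ, Fintype.card_fin]
    refine le_mul_pow_of_le (by positivity) (by positivity) (by omega) hd ?_
    have h1 := (hF i).2
    rw [div_le_iff₀ (by positivity)] at h1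
    have h2 : Γ ≤ (F i).card * (2 * k) * (k : ℝ) ^ 2 := (hBc a ha).trans (by gcongr)
    have h3 : (k : ℝ) ^ 3 ≤ (k : ℝ) ^ 6 := pow_le_pow_right₀ (by linarith) (by norm_num)
    have h4 : ((F i).card : ℝ) * (k : ℝ) ^ 3 ≤ (F i).card * (k : ℝ) ^ 6 := by gcongr
    have h5 : (0 : ℝ) ≤ (F i).card * (k : ℝ) ^ 6 := by positivity
    nlinarith
  choose! C hCB hCc hC using hconn
  have hCsize : ∀ a ∈ I, Γ ≤ 2 * (k : ℝ) ^ 3 * (C a).card := by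
    intro a ha
    have h1 := hCc a ha
    rw [div_le_iff₀ (by positivity)] at h1
    have h2 : Γ ≤ (C a).card * (2 * k) * (k : ℝ) ^ 2 := (hBc a ha).trans (by gcongr)
    linarith
  have hcomplete : ∀ a ∈ I, ∀ a' ∈ I, a ≠ a' → (∃ b ∈ C a, ∃ b' ∈ C a', G.Adj b b') →
      ∀ b ∈ C a, ∀ b' ∈ C a', G.Adj b b' := by
    rintro a ha a' ha' hne ⟨b, hb, b', hb', hbb'⟩ c hc c' hc'
    have h1 : G.Adj b c' := hB.adj_of_adj hG hI hvI hvU ha' ha hne.symm (hCB a' ha') (hC a' ha')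
      (hCB a ha hb) hb' hc' hbb'
    exact (hB.adj_of_adj hG hI hvI hvU ha ha' hne (hCB a ha) (hC a ha) (hCB a' ha' hc') hb hc
      h1.symm).symm
  let J : SimpleGraph V :=
    { Adj := fun a a' => a ≠ a' ∧ ∃ b ∈ C a, ∃ b' ∈ C a', G.Adj b b'
      symm := ⟨fun a a' ⟨hne, b, hb, b', hb', h⟩ => ⟨hne.symm, b', hb', b, hb, h.symm⟩⟩
      loopless := ⟨fun a h => h.1 rfl⟩ }
  have htri := card_le_of_triangle_free J I (by
    rintro a ha a' ha' a'' ha'' ⟨h1, b, hb, b', hb', hbb'⟩ ⟨h2, e, he, b'', hb'', heb''⟩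
      ⟨h3, f, hf, f', hf', hff'⟩
    exact hB.not_triangle hG hI hvI hvU ha ha' ha'' h1 h2 h3 (hCB a ha hb) (hCB a' ha' hb')
      (hCB a'' ha'' hb'') hbb' (hcomplete a ha a'' ha'' h2 ⟨e, he, b'', hb'', heb''⟩ b hb b'' hb'')
      (hcomplete a' ha' a'' ha'' h3 ⟨f, hf, f', hf', hff'⟩ b' hb' b'' hb''))
  obtain ⟨T, hTI, hT, hTc⟩ := exists_stableSet J I
  rw [← hTc, ← hkdef] at htri
  have hs : 2 ≤ T.card := by
    by_contra hcon
    have : T.card ≤ 1 := by omega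
    nlinarith
  refine hX.not_blockade (by omega) (I := T) (Y := C) (Finset.card_pos.1 (by omega))
    (fun a ha => hproper _ ((hCB a (hTI ha)).trans (hB a (hTI ha)).1)) ?_ ?_
  · intro a ha a' ha' hne
    refine ⟨Finset.disjoint_left.2 fun b hb hb' => hne ?_, fun b hb b' hb' hbb' =>
      hT a ha a' ha' ⟨hne, b, hb, b', hb', hbb'⟩⟩
    exact ((hB a' (hTI ha')).2 b (hCB a' (hTI ha') hb') a (hTI ha)).1
      (((hB a (hTI ha)).2 b (hCB a (hTI ha) hb) a (hTI ha)).2 rfl)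
  · intro a ha
    refine le_mul_pow_of_le (by positivity) (by positivity) hs hd ?_
    have h1 := hCsize a (hTI ha)
    have h2 : k ≤ 2 * T.card ^ 2 := by nlinarith
    have h3 : (k : ℝ) ≤ 2 * (T.card : ℝ) ^ 2 := by exact_mod_cast h2
    calc δ * X.card ≤ 2 * (k : ℝ) ^ 3 * (C a).card := hΓX.trans h1
      _ ≤ 2 * (2 * (T.card : ℝ) ^ 2) ^ 3 * (C a).card := by gcongr
      _ = _ := by ring

end

section
open scoped Classical
variable {V : Type*}

lemma Critical.two_le_card {G : SimpleGraph V} {τ : ℝ} (hτ : τ ≠ 0) {X : Finset V}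
    (h : Critical G τ X) : 2 ≤ X.card := by
  have hlt := h.lt
  by_contra hcon
  have hc : X.card = 0 ∨ X.card = 1 := by omega
  rcases hc with hc | hc
  · rw [hc, Nat.cast_zero, Real.zero_rpow hτ] at hlt
    exact absurd hlt (not_lt.2 (by positivity))
  · have hne : X.Nonempty := Finset.card_pos.1 (by omega)
    have h1 : (1 : ℝ) ≤ stab G X := by exact_mod_cast one_le_stab G hne
    have h2 : (1 : ℝ) ≤ stab Gᶜ X := by exact_mod_cast one_le_stab Gᶜ hne
    rw [hc, Nat.cast_one, Real.one_rpow] at hlt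
    nlinarith

lemma two_le_stab_mul_stab (G : SimpleGraph V) {X : Finset V} (h : 2 ≤ X.card) :
    2 ≤ stab G X * stab Gᶜ X := by
  obtain ⟨x, hx, y, hy, hne⟩ := Finset.one_lt_card.1 h
  have hX : X.Nonempty := ⟨x, hx⟩
  have h1 := one_le_stab G hX
  have h2 := one_le_stab Gᶜ hX
  have hsub : ({x, y} : Finset V) ⊆ X := by
    intro z; simp only [Finset.mem_insert, Finset.mem_singleton]; rintro (rfl | rfl) <;> assumption
  have hc : ({x, y} : Finset V).card = 2 := Finset.card_pair hne
  by_cases hxy : G.Adj x y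
  · have hs : StableSet Gᶜ {x, y} := by
      intro a ha b hb
      simp only [Finset.mem_insert, Finset.mem_singleton] at ha hb
      rcases ha with rfl | rfl <;> rcases hb with rfl | rfl <;> simp [hxy, hxy.symm]
    have := hs.card_le_stab hsub
    nlinarith
  · have hs : StableSet G {x, y} := by
      intro a ha b hb
      simp only [Finset.mem_insert, Finset.mem_singleton] at ha hb
      rcases ha with rfl | rfl <;> rcases hb with rfl | rfl <;> simp [hxy, mt G.adj_symm hxy]
    have := hs.card_le_stab hsub
    nlinarith

lemma Critical.two_pow_le_card {G : SimpleGraph V} {D : ℕ} (hD : 1 ≤ D) {X : Finset V}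
    (h : Critical G (1 / D) X) : (2 : ℝ) ^ D ≤ X.card := by
  have hD' : (0 : ℝ) < D := by exact_mod_cast hD
  have h1 := two_le_stab_mul_stab G (h.two_le_card (by positivity))
  have h2 : (2 : ℝ) ≤ (X.card : ℝ) ^ (1 / D : ℝ) :=
    le_trans (by exact_mod_cast h1) h.lt.le
  have h3 : (2 : ℝ) ^ D ≤ ((X.card : ℝ) ^ (1 / D : ℝ)) ^ D := by gcongr
  rwa [one_div, Real.rpow_inv_natCast_pow (by positivity) (by omega)] at h3

/-- The second neighbourhood of a maximum degree vertex inside a sparse set, as covered by a stable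
set of neighbours, is small. -/
lemma Critical.card_cover_le {G : SimpleGraph V} (hG : NoCopy hatC5 G) {d : ℕ} {X : Finset V}
    (hX : Critical G (1 / (d + 6 : ℕ)) X) {δ ε : ℝ} (hε : ε < 1 / 4) (hd : 16 ≤ δ * 2 ^ d)
    {S : Finset V} (hSX : S ⊆ X) (hS : SparseSet G ε S) (hSc : δ * X.card ≤ S.card)
    {R : Finset V} (hRS : R ⊆ S) {v : V} (hv : v ∈ R)
    (hmax : ∀ a ∈ R, (R.filter (G.Adj a)).card ≤ (R.filter (G.Adj v)).card)
    (hpos : 1 ≤ (R.filter (G.Adj v)).card) {T : Finset V} (hTA : T ⊆ R.filter (G.Adj v))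
    (hT : StableSet G T) :
    ((T ∪ nbhd G T R).card : ℝ) ≤ 23 * √(S.card * (R.filter (G.Adj v)).card) := by
  set A := R.filter (G.Adj v) with hA
  set U := nbhd G T R \ insert v A with hU
  have hAR : A ⊆ R := Finset.filter_subset _ _
  have hSpos : (0 : ℝ) < S.card := by exact_mod_cast Finset.card_pos.2 ⟨v, hRS hv⟩
  have hpos' : (1 : ℝ) ≤ A.card := by exact_mod_cast hpos
  have hUR : U ⊆ R := Finset.sdiff_subset.trans (Finset.filter_subset _ _)
  have hUc : (U.card : ℝ) ≤ 21 * √(S.card * A.card) := by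
    refine card_le_of_no_comb G T S.card hSpos A.card A.card (by linarith)
      (by exact_mod_cast Nat.lt_two_pow_self) U ?_ ?_ ?_
    · intro u hu
      exact (Finset.mem_filter.1 (Finset.mem_sdiff.1 hu).1).2
    · intro a ha
      exact_mod_cast (Finset.card_le_card (Finset.filter_subset_filter _ hUR)).trans
        (hmax a (hAR (hTA ha)))
    · intro I hIT B hIne hB
      by_contra hcon
      push Not at hcon
      have hk : 3 ≤ I.card := by
        obtain ⟨a, ha⟩ := hIne
        by_contra hk
        have hk2 : (I.card : ℝ) ≤ 2 := by exact_mod_cast (by omega : I.card ≤ 2)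
        have h1 : ((B a).card : ℝ) ≤ ε * S.card := by
          refine le_trans (Nat.cast_le.2 (Finset.card_le_card ?_)) (hS a (hRS (hAR (hTA (hIT ha)))))
          intro b hb
          exact Finset.mem_filter.2 ⟨hRS (hUR ((hB a ha).1 hb)), ((hB a ha).2 b hb a ha).2 rfl⟩
        have h2 : (I.card : ℝ) ^ 2 ≤ 2 ^ 2 := by gcongr
        have h3 := hcon a ha
        have h4 : ((B a).card : ℝ) * (I.card : ℝ) ^ 2 ≤ (B a).card * 2 ^ 2 := by gcongr
        nlinarith
      refine hX.not_comb hG hd hSpos hSc (hSX (hRS hv)) (I := I) (U := U)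
        (fun a ha b hb => hT a (hIT ha) b (hIT hb))
        (fun a ha => (Finset.mem_filter.1 (hTA (hIT ha))).2) (hUR.trans (hRS.trans hSX)) ?_ ?_
        hB hk hcon
      · intro u hu hvu
        exact (Finset.mem_sdiff.1 hu).2 (Finset.mem_insert_of_mem
          (Finset.mem_filter.2 ⟨hUR hu, hvu⟩))
      · exact fun h => (Finset.mem_sdiff.1 h).2 (Finset.mem_insert_self _ _)
  have hZ : T ∪ nbhd G T R ⊆ insert v A ∪ U := by
    intro x hx
    by_cases hxA : x ∈ insert v A
    · exact Finset.mem_union_left _ hxA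
    · rcases Finset.mem_union.1 hx with h | h
      · exact absurd (Finset.mem_insert_of_mem (hTA h)) hxA
      · exact Finset.mem_union_right _ (Finset.mem_sdiff.2 ⟨h, hxA⟩)
  have hZc : ((T ∪ nbhd G T R).card : ℝ) ≤ A.card + 1 + U.card := by
    have h1 := (Finset.card_le_card hZ).trans (Finset.card_union_le _ _)
    have h2 := Finset.card_insert_le v A
    exact_mod_cast h1.trans (by omega)
  have hAS : (A.card : ℝ) ≤ √(S.card * A.card) := by
    refine Real.le_sqrt_of_sq_le ?_
    have : (A.card : ℝ) ≤ S.card := by exact_mod_cast Finset.card_le_card (hAR.trans hRS)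
    nlinarith
  linarith

lemma Critical.greedy {G : SimpleGraph V} (hG : NoCopy hatC5 G) {d : ℕ} {X : Finset V}
    (hX : Critical G (1 / (d + 6 : ℕ)) X) {δ ε c : ℝ} (hε : ε < 1 / 4) (hd : 16 ≤ δ * 2 ^ d)
    {S : Finset V} (hSX : S ⊆ X) (hS : SparseSet G ε S) (hSc : δ * X.card ≤ S.card)
    (hc0 : 0 ≤ c) (hc1 : c ≤ 1)
    (hc : ∀ x : ℝ, 1 ≤ x → x ≤ ε * S.card →
      c * (23 * √(S.card * x)) ≤ x ^ (1 / (d + 6 : ℕ) : ℝ))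
    (R : Finset V) (hRS : R ⊆ S) : c * R.card ≤ stab G R * stab Gᶜ X := by
  induction hn : R.card using Nat.strong_induction_on generalizing R with
  | _ n ih =>
  rcases R.eq_empty_or_nonempty with rfl | hne
  · simp only [Finset.card_empty] at hn
    subst hn
    simp only [Nat.cast_zero, mul_zero]
    positivity
  subst hn
  obtain ⟨v, hv, hmax⟩ := Finset.exists_max_image R (fun a => (R.filter (G.Adj a)).card) hne
  have hω : (1 : ℝ) ≤ stab Gᶜ X := by
    exact_mod_cast one_le_stab Gᶜ ⟨v, hSX (hRS hv)⟩
  have step : ∀ T Z : Finset V, T ⊆ Z → Z ⊆ R → T.Nonempty → StableSet G T →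
      Anticomplete G T (R \ Z) → c * Z.card ≤ T.card * stab Gᶜ X →
      c * R.card ≤ stab G R * stab Gᶜ X := by
    intro T Z hTZ hZR hTne hT hanti hZ
    have hcard : ((R \ Z).card : ℝ) + Z.card = R.card := by
      exact_mod_cast Finset.card_sdiff_add_card_eq_card hZR
    have hlt : (R \ Z).card < R.card := by
      have h1 := Finset.card_sdiff_add_card_eq_card hZR
      have h2 := (hTne.mono hTZ).card_pos
      omega
    have h1 := ih _ hlt (R \ Z) (Finset.sdiff_subset.trans hRS) rfl
    have h2 := hanti.stab_add_le (hTZ.trans hZR) Finset.sdiff_subset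
    have h3 := hT.card_le_stab (subset_refl T)
    have h4 : (T.card : ℝ) + stab G (R \ Z) ≤ stab G R := by exact_mod_cast (by omega)
    calc c * R.card = c * Z.card + c * (R \ Z).card := by rw [← hcard]; ring
      _ ≤ (T.card + stab G (R \ Z)) * stab Gᶜ X := by linarith
      _ ≤ _ := by gcongr
  rcases Nat.eq_zero_or_pos (R.filter (G.Adj v)).card with h0 | hpos
  · refine step {v} {v} subset_rfl (by simpa using hv) (by simp) (by simp [StableSet]) ?_ ?_
    · refine ⟨by simp, fun a ha b hb hab => ?_⟩
      rw [Finset.mem_singleton] at ha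
      subst ha
      have : b ∈ R.filter (G.Adj a) := Finset.mem_filter.2 ⟨(Finset.mem_sdiff.1 hb).1, hab⟩
      rw [Finset.card_eq_zero.1 h0] at this
      simp at this
    · simp only [Finset.card_singleton, Nat.cast_one]
      linarith
  · set A := R.filter (G.Adj v) with hA
    have hAR : A ⊆ R := Finset.filter_subset _ _
    obtain ⟨T, hTA, hT, hTc⟩ := exists_stableSet G A
    have hAX : A ⊂ X := Finset.ssubset_iff_subset_ne.2 ⟨hAR.trans (hRS.trans hSX), fun h =>
      G.irrefl (Finset.mem_filter.1 (h ▸ hSX (hRS hv) : v ∈ A)).2⟩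
    refine step T (T ∪ nbhd G T R) Finset.subset_union_left
      (Finset.union_subset (hTA.trans hAR) (Finset.filter_subset _ _)) ?_ hT ?_ ?_
    · have := one_le_stab G (Finset.card_pos.1 hpos)
      exact Finset.card_pos.1 (by omega)
    · refine ⟨Finset.disjoint_of_subset_left Finset.subset_union_left Finset.disjoint_sdiff,
        fun a ha b hb hab => ?_⟩
      rw [Finset.mem_sdiff] at hb
      exact hb.2 (Finset.mem_union_right _ (Finset.mem_filter.2 ⟨hb.1, a, ha, hab⟩))
    · have h1 := hX.card_cover_le hG hε hd hSX hS hSc hRS hv hmax hpos hTA hT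
      have h2 : (A.card : ℝ) ≤ ε * S.card := le_trans (Nat.cast_le.2 (Finset.card_le_card
        (Finset.filter_subset_filter _ hRS))) (hS v (hRS hv))
      have h3 := hc A.card (by exact_mod_cast hpos) h2
      have h4 := hX.le_of_ssubset A hAX
      have h5 : (stab Gᶜ A : ℝ) ≤ stab Gᶜ X := by exact_mod_cast stab_mono hAX.1
      calc c * (T ∪ nbhd G T R).card ≤ c * (23 * √(S.card * A.card)) := by gcongr
        _ ≤ _ := h3
        _ ≤ _ := h4
        _ ≤ _ := by rw [hTc]; gcongr

lemma Critical.not_sparse {G : SimpleGraph V} (hG : NoCopy hatC5 G) {d : ℕ} {X : Finset V}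
    (hX : Critical G (1 / (d + 6 : ℕ)) X) {δ : ℝ} (hd : 50 ^ 4 ≤ δ * 2 ^ d)
    {S : Finset V} (hSX : S ⊆ X) (hSc : δ * X.card ≤ S.card) :
    ¬ SparseSet G (1 / 50 ^ 4) S := by
  intro hS
  have hδ : 0 < δ := by
    by_contra h
    push Not at h
    have : δ * 2 ^ d ≤ 0 := mul_nonpos_of_nonpos_of_nonneg h (by positivity)
    linarith
  set D := d + 6 with hD
  set τ : ℝ := 1 / (D : ℕ) with hτ
  set M : ℝ := (S.card : ℝ) with hM
  have hD6 : (6 : ℝ) ≤ D := by exact_mod_cast (by omega : 6 ≤ D)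
  have hτ0 : 0 < τ := by positivity
  have hτ1 : τ ≤ 1 / 4 := by rw [hτ]; gcongr; linarith
  have hn := hX.two_pow_le_card (by omega)
  have hMlarge : 50 ^ 4 ≤ M := by
    have h1 : (2 : ℝ) ^ d ≤ 2 ^ D := pow_le_pow_right₀ (by norm_num) (by omega)
    have h2 : δ * 2 ^ d ≤ δ * X.card := by gcongr; linarith
    linarith
  have hM0 : 0 < M := by linarith
  set ε : ℝ := 1 / 50 ^ 4 with hε
  have hε0 : 0 < ε := by positivity
  have hεM : 1 ≤ ε * M := by
    rw [hε, div_mul_eq_mul_div, one_mul, le_div_iff₀ (by positivity)]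
    linarith
  set p : ℝ := (ε * M) ^ (τ - 1 / 2) with hp
  have hp0 : 0 < p := by positivity
  have hp1 : p ≤ 1 := Real.rpow_le_one_of_one_le_of_nonpos hεM (by linarith)
  have hsq : 1 ≤ √M := Real.one_le_sqrt.2 (by linarith)
  have hgreedy := hX.greedy hG (ε := ε) (c := p / (23 * √M)) (by rw [hε]; norm_num) (by linarith)
    hSX hS hSc (by positivity) (by rw [div_le_one (by positivity)]; linarith) (by
      intro x hx1 hx2
      have h1 : p ≤ x ^ (τ - 1 / 2) :=
        Real.rpow_le_rpow_of_nonpos (by linarith) hx2 (by linarith)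
      have h2 : p / (23 * √M) * (23 * √(M * x)) = p * √x := by
        rw [Real.sqrt_mul hM0.le]; field_simp
      change p / (23 * √M) * (23 * √(M * x)) ≤ x ^ τ
      rw [h2]
      calc p * √x ≤ x ^ (τ - 1 / 2) * x ^ (1 / 2 : ℝ) := by
            rw [← Real.sqrt_eq_rpow]; gcongr
        _ = x ^ τ := by rw [← Real.rpow_add (by linarith)]; congr 1; ring) S subset_rfl
  have hstab : (stab G S : ℝ) * stab Gᶜ X ≤ stab G X * stab Gᶜ X := by
    have : (stab G S : ℝ) ≤ stab G X := by exact_mod_cast stab_mono hSX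
    gcongr
  have hlt := hX.lt
  change p / (23 * √M) * M ≤ _ at hgreedy
  have hval : p / (23 * √M) * M = ε ^ (τ - 1 / 2) * M ^ τ / 23 := by
    have h1 : M ^ (τ - 1 / 2) * √M = M ^ τ := by
      rw [Real.sqrt_eq_rpow, ← Real.rpow_add hM0]; congr 1; ring
    have h2 : M = √M * √M := (Real.mul_self_sqrt hM0.le).symm
    rw [hp, Real.mul_rpow hε0.le hM0.le, ← h1]
    nth_rewrite 3 [h2]
    field_simp
  have h50 : 50 ≤ ε ^ (τ - 1 / 2) := by
    have h1 : ε ^ (-(1 / 4) : ℝ) ≤ ε ^ (τ - 1 / 2) :=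
      Real.rpow_le_rpow_of_exponent_ge hε0 (by rw [hε]; norm_num) (by linarith)
    have h2 : ε ^ (-(1 / 4) : ℝ) = 50 := by
      rw [hε, one_div, Real.inv_rpow (by positivity), Real.rpow_neg (by positivity), inv_inv,
        ← Real.rpow_natCast, ← Real.rpow_mul (by norm_num)]
      norm_num
    linarith
  have hMn : (X.card : ℝ) ^ τ / 2 ≤ M ^ τ := by
    have h1 : ((X.card : ℝ) / 2 ^ D) ^ τ ≤ M ^ τ := by
      refine Real.rpow_le_rpow (by positivity) ?_ hτ0.le
      refine le_trans ?_ hSc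
      rw [div_le_iff₀ (by positivity)]
      have h2 : (2 : ℝ) ^ d ≤ 2 ^ D := pow_le_pow_right₀ (by norm_num) (by omega)
      have h3 : 1 ≤ δ * 2 ^ D := by nlinarith
      nlinarith
    rw [Real.div_rpow (by positivity) (by positivity), hτ, one_div,
      Real.pow_rpow_inv_natCast (by norm_num) (by omega), ← one_div, ← hτ] at h1
    exact h1
  have hXτ : 0 ≤ (X.card : ℝ) ^ τ := by positivity
  have hfin : 50 * ((X.card : ℝ) ^ τ / 2) ≤ ε ^ (τ - 1 / 2) * M ^ τ := by gcongr
  rw [hval] at hgreedy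
  linarith

end

section
open scoped Classical
variable {V : Type*}

lemma rpow_card_le_stab_mul_stab {G : SimpleGraph V} {δ : ℝ} {d : ℕ} (hd : 50 ^ 4 ≤ δ * 2 ^ d)
    (hG : NoCopy hatC5 G) (hG' : NoCopy hatC5 Gᶜ)
    (hδ : ∀ X : Finset V, X.Nonempty → ∃ S ⊆ X, δ * X.card ≤ S.card ∧
      (SparseSet G (1 / 50 ^ 4) S ∨ SparseSet Gᶜ (1 / 50 ^ 4) S)) (X : Finset V) :
    (X.card : ℝ) ^ (1 / (d + 6 : ℕ) : ℝ) ≤ stab G X * stab Gᶜ X := by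
  induction X using Finset.strongInduction with
  | H X ih =>
  by_contra hcon
  have hX : Critical G (1 / (d + 6 : ℕ)) X := ⟨ih, not_le.1 hcon⟩
  have hpos : 2 ≤ X.card := hX.two_le_card (by positivity)
  obtain ⟨S, hSX, hSc, hS | hS⟩ := hδ X (Finset.card_pos.1 (by omega))
  · exact hX.not_sparse hG hd hSX hSc hS
  · exact hX.compl.not_sparse hG' hd hSX hSc hS

lemma stab_compl_le_cliqueNum [Finite V] (G : SimpleGraph V) (X : Finset V) :
    stab Gᶜ X ≤ G.cliqueNum := by
  obtain ⟨T, -, hT, hTc⟩ := exists_stableSet Gᶜ X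
  have hcl : G.IsClique T := by
    intro a ha b hb hne
    by_contra hab
    exact hT a ha b hb ⟨hne, hab⟩
  exact hTc ▸ IsClique.card_le_cliqueNum (tc := hcl)

end

/-- `{Ĉ₅, complement of Ĉ₅}` has the Erdős–Hajnal property. -/
theorem stmt_1 :
    ∃ τ : ℝ, 0 < τ ∧
      ∀ (V : Type) [Fintype V] (G : SimpleGraph V),
        ¬ Nonempty (hatC5 ↪g G) →
        ¬ Nonempty (hatC5ᶜ ↪g G) →
        (Fintype.card V : ℝ) ^ τ ≤ ((max (alphaNum G) (omegaNum G) : ℕ) : ℝ) := by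
  obtain ⟨δ, hδ, hRodl⟩ := exists_sparse_or_dense (k := 6) (by norm_num) hatC5 (1 / 50 ^ 4)
    (by positivity) (by norm_num)
  obtain ⟨d, hd⟩ := pow_unbounded_of_one_lt (50 ^ 4 / δ) (one_lt_two)
  rw [div_lt_iff₀' hδ] at hd
  refine ⟨1 / (d + 6 : ℕ) / 2, by positivity, ?_⟩
  intro V _ G hG hG'
  have h := rpow_card_le_stab_mul_stab hd.le (noCopy_hatC5 hG) (noCopy_hatC5_compl hG')
    (fun X hX => hRodl G X (noCopy_hatC5 hG) hX) Finset.univ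
  have hω : (stab Gᶜ Finset.univ : ℝ) ≤ (max (alphaNum G) (omegaNum G) : ℕ) :=
    Nat.cast_le.2 ((stab_compl_le_cliqueNum G _).trans (le_max_right _ _))
  have hα : (stab G Finset.univ : ℝ) ≤ (max (alphaNum G) (omegaNum G) : ℕ) := by
    have := stab_compl_le_cliqueNum Gᶜ Finset.univ
    rw [compl_compl] at this
    exact Nat.cast_le.2 (this.trans (le_max_left _ _))
  rw [Finset.card_univ] at h
  refine le_of_sq_le_sq ?_ (by positivity)
  rw [← Real.rpow_mul_natCast (by positivity)]
  calc _ = (Fintype.card V : ℝ) ^ (1 / (d + 6 : ℕ) : ℝ) := by congr 1; push_cast; ring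
    _ ≤ _ := h
    _ ≤ _ := by rw [sq]; gcongr
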